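/- (Negative answer to Cusick's conjecture) There exists a real number x with x > √12 such that x ∈ M and x ∉ L; that is, (M ∖ L) ∩ (√12, ∞) ≠ ∅. -/

import Mathlib

open scoped ENNReal

/-- The distance from a real number to the nearest integer. -/
noncomputable def distNearestInt (x : ℝ) : ℝ := |x - round x|

/-- The best constant of Diophantine approximation of `α`,
`ℓ(α) = limsup_{q → ∞} 1 / (q ⬝ ‖q α‖) ∈ [0, ∞]`. -/
noncomputable def lagrangeVal (α : ℝ) : ℝ≥0∞ :=
  Filter.limsup (fun q : ℕ => ENNReal.ofReal (1 / (q * distNearestInt (q * α)))) Filter.atTop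

/-- The Lagrange spectrum: the set of finite values `ℓ(α)` over irrational `α`. -/
def LagrangeSpectrum : Set ℝ :=
  {t | ∃ α : ℝ, Irrational α ∧ lagrangeVal α ≠ ⊤ ∧ (lagrangeVal α).toReal = t}

/-- The best constant of Diophantine approximation of the binary quadratic form
`h(x,y) = a x² + b x y + c y²`, namely `m(h) = sup_{(p,q) ≠ (0,0)} √Δ(h) / |h(p,q)| ∈ (0, ∞]`. -/
noncomputable def markovVal (a b c : ℝ) : ℝ≥0∞ :=
  ⨆ (pq : ℤ × ℤ) (_ : pq ≠ (0, 0)),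
    ENNReal.ofReal (Real.sqrt (b ^ 2 - 4 * a * c)) /
      ENNReal.ofReal |a * (pq.1 : ℝ) ^ 2 + b * pq.1 * pq.2 + c * (pq.2 : ℝ) ^ 2|

/-- The Markov spectrum: the set of finite values `m(h)` over real indefinite binary
quadratic forms `h` with positive discriminant. -/
def MarkovSpectrum : Set ℝ :=
  {t | ∃ a b c : ℝ, 0 < b ^ 2 - 4 * a * c ∧ markovVal a b c ≠ ⊤ ∧ (markovVal a b c).toReal = t}

open Filter

namespace Cusick

/-- `cfBound true l` and `cfBound false l` are (numerator, denominator) of an upper and a lower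
bound for the continued fractions with partial quotients at most `3` whose expansion starts with `l`. -/
def cfBound : Bool → List ℕ → ℕ × ℕ
  | b, [] => if b then (19, 5) else (5, 4)
  | b, d :: l => match cfBound (!b) l with
    | (p, q) => (d * p + q, p)

/-- The partial quotients `a n, a (n + 1), …` start with `r`. -/
def Fwd (a : ℤ → ℕ) : ℤ → List ℕ → Prop
  | _, [] => True
  | n, d :: r => a n = d ∧ Fwd a (n + 1) r

/-- The partial quotients `a (n - 1), a (n - 2), …` start with `l`. -/
def Bwd (a : ℤ → ℕ) : ℤ → List ℕ → Prop
  | _, [] => True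
  | n, d :: l => a (n - 1) = d ∧ Bwd a (n - 1) l

/-- Along the filter `F`, the numbers `α n = [a n; a (n + 1), …]` and
`γ n = [a (n - 1); a (n - 2), …]` are the tails of a continued fraction
with partial quotients at most `3`. -/
structure Tails (F : Filter ℤ) (a : ℤ → ℕ) (α γ : ℤ → ℝ) : Prop where
  shift : ∀ k : ℤ, Tendsto (fun n => n + k) F F
  digit : ∀ᶠ n in F, a n = 1 ∨ a n = 2 ∨ a n = 3
  fwd : ∀ᶠ n in F, α n = a n + 1 / α (n + 1)
  bwd : ∀ᶠ n in F, γ n = a (n - 1) + 1 / γ (n - 1)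
  fwd_mem : ∀ᶠ n in F, 5 / 4 ≤ α n ∧ α n ≤ 19 / 5
  bwd_mem : ∀ᶠ n in F, 5 / 4 ≤ γ n ∧ γ n ≤ 19 / 5

/-- `v` lies between the two bounds given by the initial partial quotients `l`. -/
def InBounds (l : List ℕ) (v : ℝ) : Prop :=
  ∀ b, 0 < (cfBound b l).1 ∧ 0 < (cfBound b l).2 ∧
    if b then v * (cfBound b l).2 ≤ (cfBound b l).1 else ((cfBound b l).1 : ℝ) ≤ v * (cfBound b l).2

lemma inBounds_nil {v : ℝ} (h : 5 / 4 ≤ v ∧ v ≤ 19 / 5) : InBounds [] v := by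
  rintro (_ | _) <;> norm_num [cfBound] <;> linarith [h.1, h.2]

lemma InBounds.cons {l : List ℕ} {v v' : ℝ} {d : ℕ} (h : InBounds l v') (hv' : 0 < v')
    (hv : v = d + 1 / v') : InBounds (d :: l) v := by
  have key : v * v' = d * v' + 1 := by rw [hv]; field_simp
  rintro (_ | _)
  · obtain ⟨h1, h2, h3⟩ := h true
    simp only [if_true] at h3
    refine ⟨by simp only [cfBound, Bool.not_false]; positivity, by simpa only [cfBound], ?_⟩
    simp only [cfBound, Bool.not_false, Bool.false_eq_true, if_false]
    push_cast
    have h2' : (0 : ℝ) < (cfBound true l).2 := by exact_mod_cast h2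
    have : ((cfBound true l).2 : ℝ) ≤ (cfBound true l).1 * (1 / v') := by
      rw [mul_one_div, le_div_iff₀ hv']; linarith
    rw [hv]; linarith
  · obtain ⟨h1, h2, h3⟩ := h false
    simp only [Bool.false_eq_true, if_false] at h3
    refine ⟨by simp only [cfBound, Bool.not_true]; positivity, by simpa only [cfBound], ?_⟩
    simp only [cfBound, Bool.not_true, if_true]
    push_cast
    have : ((cfBound false l).1 : ℝ) * (1 / v') ≤ (cfBound false l).2 := by
      rw [mul_one_div, div_le_iff₀ hv']; linarith
    rw [hv]; linarith

namespace Tails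

variable {F : Filter ℤ} {a : ℤ → ℕ} {α γ : ℤ → ℝ}

lemma eventually_add (H : Tails F a α γ) (k : ℤ) {P : ℤ → Prop} (h : ∀ᶠ n in F, P n) :
    ∀ᶠ n in F, P (n + k) := (H.shift k).eventually h

lemma eventually_sub_one (H : Tails F a α γ) {P : ℤ → Prop} (h : ∀ᶠ n in F, P n) :
    ∀ᶠ n in F, P (n - 1) := H.eventually_add (-1) h

lemma inBounds_fwd (H : Tails F a α γ) (r : List ℕ) :
    ∀ᶠ n in F, Fwd a n r → InBounds r (α n) := by
  induction r with
  | nil => filter_upwards [H.fwd_mem] with n hn _ using inBounds_nil hn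
  | cons d r ih =>
    filter_upwards [H.fwd, H.eventually_add 1 ih, H.eventually_add 1 H.fwd_mem]
      with n h1 h2 h3 ⟨h4, h5⟩
    exact (h2 h5).cons (by linarith [h3.1]) (by rw [h1, h4])

lemma inBounds_bwd (H : Tails F a α γ) (l : List ℕ) :
    ∀ᶠ n in F, Bwd a n l → InBounds l (γ n) := by
  induction l with
  | nil => filter_upwards [H.bwd_mem] with n hn _ using inBounds_nil hn
  | cons d l ih =>
    filter_upwards [H.bwd, H.eventually_sub_one ih, H.eventually_sub_one H.bwd_mem]
      with n h1 h2 h3 ⟨h4, h5⟩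
    exact (h2 h5).cons (by linarith [h3.1]) (by rw [h1, h4])

end Tails

/-- The numerator of the upper threshold, with denominator `10 ^ 13`. -/
def hiNum : ℕ := 37096998597503

/-- The numerator of the lower threshold, with denominator `10 ^ 13`. -/
def loNum : ℕ := 37096998597400

/-- Every bi-infinite sequence around the window `l`, `r` has its central value above
`N / 10 ^ 13`. -/
def tooBig (N : ℕ) (l r : List ℕ) : Bool :=
  match cfBound false r, cfBound true l with
  | (p, q), (s, t) => Nat.blt (N * (q * s)) (10 ^ 13 * (p * s + t * q))

/-- Every bi-infinite sequence around the window `l`, `r` has its central value below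
`N / 10 ^ 13`. -/
def tooSmall (N : ℕ) (l r : List ℕ) : Bool :=
  match cfBound true r, cfBound false l with
  | (p, q), (s, t) => Nat.blt (10 ^ 13 * (p * s + t * q)) (N * (q * s))

lemma lt_of_tooBig {N : ℕ} {l r : List ℕ} {u v : ℝ} (h : tooBig N l r = true) (hu : InBounds r u)
    (hv : InBounds l v) (hv0 : 0 < v) : (N / 10 ^ 13 : ℝ) < u + 1 / v := by
  obtain ⟨-, hq, h1⟩ := hu false
  obtain ⟨hs, -, h2⟩ := hv true
  simp only [Bool.false_eq_true, if_false, if_true] at h1 h2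
  have h3 : (N * ((cfBound false r).2 * (cfBound true l).1) : ℝ) <
      10 ^ 13 * ((cfBound false r).1 * (cfBound true l).1 +
        (cfBound true l).2 * (cfBound false r).2) := by
    simp only [tooBig, Nat.blt_eq] at h
    exact_mod_cast h
  generalize (cfBound false r).1 = p at *
  generalize (cfBound false r).2 = q at *
  generalize (cfBound true l).1 = s at *
  generalize (cfBound true l).2 = t at *
  have hq' : (0 : ℝ) < q := by exact_mod_cast hq
  have hs' : (0 : ℝ) < s := by exact_mod_cast hs
  have h4 : (p : ℝ) / q ≤ u := by rwa [div_le_iff₀ hq']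
  have h5 : (t : ℝ) / s ≤ 1 / v := by rw [div_le_div_iff₀ hs' hv0]; linarith
  have h6 : (N / 10 ^ 13 : ℝ) < p / q + t / s := by
    rw [div_add_div _ _ hq'.ne' hs'.ne', div_lt_div_iff₀ (by positivity) (by positivity)]
    linarith
  linarith

lemma lt_of_tooSmall {N : ℕ} {l r : List ℕ} {u v : ℝ} (h : tooSmall N l r = true)
    (hu : InBounds r u) (hv : InBounds l v) (hv0 : 0 < v) : u + 1 / v < (N / 10 ^ 13 : ℝ) := by
  obtain ⟨-, hq, h1⟩ := hu true
  obtain ⟨hs, -, h2⟩ := hv false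
  simp only [Bool.false_eq_true, if_false, if_true] at h1 h2
  have h3 : (10 ^ 13 * ((cfBound true r).1 * (cfBound false l).1 +
        (cfBound false l).2 * (cfBound true r).2) : ℝ) <
      N * ((cfBound true r).2 * (cfBound false l).1) := by
    simp only [tooSmall, Nat.blt_eq] at h
    exact_mod_cast h
  generalize (cfBound true r).1 = p at *
  generalize (cfBound true r).2 = q at *
  generalize (cfBound false l).1 = s at *
  generalize (cfBound false l).2 = t at *
  have hq' : (0 : ℝ) < q := by exact_mod_cast hq
  have hs' : (0 : ℝ) < s := by exact_mod_cast hs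
  have h4 : u ≤ (p : ℝ) / q := by rwa [le_div_iff₀ hq']
  have h5 : 1 / v ≤ (t : ℝ) / s := by rw [div_le_div_iff₀ hv0 hs']; linarith
  have h6 : (p / q + t / s : ℝ) < N / 10 ^ 13 := by
    rw [div_add_div _ _ hq'.ne' hs'.ne', div_lt_div_iff₀ (by positivity) (by positivity)]
    linarith
  linarith

/-- Some window obtained by moving the centre of `l`, `r` to the right is `tooBig`.
Only centres `3` are tested. -/
def bigRight : List ℕ → List ℕ → Bool
  | _, [] => false
  | l, d :: r => (Nat.beq d 3 && tooBig hiNum l (d :: r)) || bigRight (d :: l) r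

/-- Some window obtained by moving the centre of `l`, `r` to the left is `tooBig`.
Only centres `3` are tested. -/
def bigLeft : List ℕ → List ℕ → Bool
  | [], _ => false
  | d :: l, r => (Nat.beq d 3 && tooBig hiNum l (d :: r)) || bigLeft l (d :: r)

/-- Search through the windows extending `l`, `r`: every branch has to reach one of the `goals` or a
contradiction with the upper threshold (and, if `b`, with the lower one at the centre). -/
def explore (b : Bool) (goals : List (List ℕ × List ℕ)) : ℕ → List ℕ → List ℕ → Bool
  | 0, _, _ => false
  | k + 1, l, r =>
    goals.any (fun g => g.1.isPrefixOf l && g.2.isPrefixOf r) || (b && tooSmall loNum l r) ||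
    bigRight l r || bigLeft l r ||
    if Nat.blt l.length r.length then
      explore b goals k (l ++ [1]) r && (explore b goals k (l ++ [2]) r &&
        explore b goals k (l ++ [3]) r)
    else
      explore b goals k l (r ++ [1]) && (explore b goals k l (r ++ [2]) &&
        explore b goals k l (r ++ [3]))

lemma fwd_append {a : ℤ → ℕ} {n : ℤ} {r s : List ℕ} :
    Fwd a n (r ++ s) ↔ Fwd a n r ∧ Fwd a (n + r.length) s := by
  induction r generalizing n with
  | nil => simp [Fwd]
  | cons d r ih =>
    simp only [List.cons_append, Fwd, ih, List.length_cons, and_assoc]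
    push_cast
    rw [show n + 1 + (r.length : ℤ) = n + (r.length + 1) by ring]

lemma bwd_append {a : ℤ → ℕ} {n : ℤ} {l s : List ℕ} :
    Bwd a n (l ++ s) ↔ Bwd a n l ∧ Bwd a (n - l.length) s := by
  induction l generalizing n with
  | nil => simp [Bwd]
  | cons d l ih =>
    simp only [List.cons_append, Bwd, ih, List.length_cons, and_assoc]
    push_cast
    rw [show n - 1 - (l.length : ℤ) = n - (l.length + 1) by ring]

lemma Fwd.of_isPrefixOf {a : ℤ → ℕ} {n : ℤ} {r s : List ℕ} (h : Fwd a n s)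
    (hr : r.isPrefixOf s = true) : Fwd a n r := by
  obtain ⟨t, rfl⟩ := List.isPrefixOf_iff_prefix.mp hr
  exact (fwd_append.mp h).1

lemma Bwd.of_isPrefixOf {a : ℤ → ℕ} {n : ℤ} {l s : List ℕ} (h : Bwd a n s)
    (hl : l.isPrefixOf s = true) : Bwd a n l := by
  obtain ⟨t, rfl⟩ := List.isPrefixOf_iff_prefix.mp hl
  exact (bwd_append.mp h).1

namespace Tails

variable {F : Filter ℤ} {a : ℤ → ℕ} {α γ : ℤ → ℝ}

lemma lt_of_tooBig (H : Tails F a α γ) {N : ℕ} {l r : List ℕ} (h : tooBig N l r = true) :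
    ∀ᶠ n in F, Bwd a n l → Fwd a n r → (N / 10 ^ 13 : ℝ) < α n + 1 / γ n := by
  filter_upwards [H.inBounds_fwd r, H.inBounds_bwd l, H.bwd_mem] with n h2 h3 h4 h5 h6
  exact Cusick.lt_of_tooBig h (h2 h6) (h3 h5) (by linarith [h4.1])

lemma not_tooBig (H : Tails F a α γ) (hi : ∀ᶠ n in F, α n + 1 / γ n < hiNum / 10 ^ 13)
    {l r : List ℕ} (h : tooBig hiNum l r = true) : ∀ᶠ n in F, Bwd a n l → ¬ Fwd a n r := by
  filter_upwards [hi, H.lt_of_tooBig h] with n h1 h2 h3 h4 using lt_asymm h1 (h2 h3 h4)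

lemma lt_of_tooSmall (H : Tails F a α γ) {N : ℕ} {l r : List ℕ} (h : tooSmall N l r = true) :
    ∀ᶠ n in F, Bwd a n l → Fwd a n r → α n + 1 / γ n < N / 10 ^ 13 := by
  filter_upwards [H.inBounds_fwd r, H.inBounds_bwd l, H.bwd_mem] with n h2 h3 h4 h5 h6
  exact Cusick.lt_of_tooSmall h (h2 h6) (h3 h5) (by linarith [h4.1])

lemma not_bigRight (H : Tails F a α γ) (hi : ∀ᶠ n in F, α n + 1 / γ n < hiNum / 10 ^ 13)
    {l r : List ℕ} (h : bigRight l r = true) : ∀ᶠ n in F, Bwd a n l → ¬ Fwd a n r := by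
  induction r generalizing l with
  | nil => simp [bigRight] at h
  | cons d r ih =>
    simp only [bigRight, Bool.or_eq_true, Bool.and_eq_true] at h
    rcases h with h | h
    · exact H.not_tooBig hi h.2
    · filter_upwards [H.eventually_add 1 (ih h)] with n hn h1 h2
      refine hn ⟨?_, ?_⟩ h2.2
      · rw [add_sub_cancel_right]; exact h2.1
      · rwa [add_sub_cancel_right]

lemma not_bigLeft (H : Tails F a α γ) (hi : ∀ᶠ n in F, α n + 1 / γ n < hiNum / 10 ^ 13)
    {l r : List ℕ} (h : bigLeft l r = true) : ∀ᶠ n in F, Bwd a n l → ¬ Fwd a n r := by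
  induction l generalizing r with
  | nil => simp [bigLeft] at h
  | cons d l ih =>
    simp only [bigLeft, Bool.or_eq_true, Bool.and_eq_true] at h
    have key : ∀ᶠ n in F, Bwd a n l → ¬ Fwd a n (d :: r) := by
      rcases h with h | h
      · exact H.not_tooBig hi h.2
      · exact ih h
    filter_upwards [H.eventually_sub_one key] with n hn h1 h2
    refine hn h1.2 ⟨h1.1, ?_⟩
    rwa [sub_add_cancel]

lemma of_explore (H : Tails F a α γ) (hi : ∀ᶠ n in F, α n + 1 / γ n < hiNum / 10 ^ 13)
    {b : Bool} {goals : List (List ℕ × List ℕ)} {k : ℕ} {l r : List ℕ}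
    (h : explore b goals k l r = true) :
    ∀ᶠ n in F, Bwd a n l → Fwd a n r → (b = true → loNum / 10 ^ 13 < α n + 1 / γ n) →
      ∃ g ∈ goals, Bwd a n g.1 ∧ Fwd a n g.2 := by
  induction k generalizing l r with
  | zero => simp [explore] at h
  | succ k ih =>
    simp only [explore, Bool.or_eq_true, Bool.and_eq_true, List.any_eq_true] at h
    rcases h with (((h | h) | h) | h) | h
    · obtain ⟨g, hg, h1, h2⟩ := h
      exact .of_forall fun n hl hr _ => ⟨g, hg, hl.of_isPrefixOf h1, hr.of_isPrefixOf h2⟩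
    · filter_upwards [H.lt_of_tooSmall h.2] with n h1 hl hr h2
      exact absurd (h1 hl hr) (lt_asymm (h2 h.1))
    · filter_upwards [H.not_bigRight hi h] with n h1 hl hr _ using absurd hr (h1 hl)
    · filter_upwards [H.not_bigLeft hi h] with n h1 hl hr _ using absurd hr (h1 hl)
    · split at h
      · simp only [Bool.and_eq_true] at h
        filter_upwards [ih h.1, ih h.2.1, ih h.2.2, H.eventually_add (-l.length - 1) H.digit]
          with n h1 h2 h3 h4 hl hr h5
        have key : ∀ d, a (n + (-l.length - 1)) = d → Bwd a n (l ++ [d]) := by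
          refine fun d hd => bwd_append.mpr ⟨hl, ?_, trivial⟩
          rw [← hd]; congr 1; ring
        rcases h4 with h4 | h4 | h4
        · exact h1 (key _ h4) hr h5
        · exact h2 (key _ h4) hr h5
        · exact h3 (key _ h4) hr h5
      · simp only [Bool.and_eq_true] at h
        filter_upwards [ih h.1, ih h.2.1, ih h.2.2, H.eventually_add r.length H.digit]
          with n h1 h2 h3 h4 hl hr h5
        have key : ∀ d, a (n + r.length) = d → Fwd a n (r ++ [d]) :=
          fun d hd => fwd_append.mpr ⟨hr, hd, trivial⟩
        rcases h4 with h4 | h4 | h4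
        · exact h1 hl (key _ h4) h5
        · exact h2 hl (key _ h4) h5
        · exact h3 hl (key _ h4) h5

end Tails

/-- The periodic sequence with period `3, 2, 2, 2, 1, 2, 3`. -/
def perWord (i : ℤ) : ℕ := [3, 2, 2, 2, 1, 2, 3].getD (i % 7).toNat 0

/-- The mirror image of `perWord`. -/
def revWord (i : ℤ) : ℕ := perWord (-i)

/-- The entries `v s, v (s + 1), …, v (s + k - 1)`. -/
def fwdList (v : ℤ → ℕ) (s : ℤ) (k : ℕ) : List ℕ := (List.range k).map fun i : ℕ => v (s + (i : ℤ))

/-- The entries `v (s - 1), v (s - 2), …, v (s - k)`. -/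
def bwdList (v : ℤ → ℕ) (s : ℤ) (k : ℕ) : List ℕ :=
  (List.range k).map fun i : ℕ => v (s - 1 - (i : ℤ))

lemma explore_centre : explore true
    [(bwdList perWord 0 9, fwdList perWord 0 12),
      (bwdList revWord 0 11, fwdList revWord 0 10)] 30 [] [] = true := by
  decide +kernel

lemma explore_left : explore false [(bwdList perWord 0 16, [])] 30
    (bwdList perWord 0 9) (fwdList perWord 0 12) = true := by
  decide +kernel

lemma explore_right : explore false [([], fwdList revWord 0 17)] 30
    (bwdList revWord 0 11) (fwdList revWord 0 10) = true := by
  decide +kernel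

lemma perWord_add_seven (i : ℤ) : perWord (i + 7) = perWord i := by
  rw [perWord, Int.add_emod_right, perWord]

lemma perWord_sub_seven (i : ℤ) : perWord (i - 7) = perWord i := by
  rw [← perWord_add_seven, sub_add_cancel]

lemma revWord_add_seven (i : ℤ) : revWord (i + 7) = revWord i := by
  rw [revWord, neg_add', perWord_sub_seven, revWord]

lemma fwd_fwdList {a v : ℤ → ℕ} {n s : ℤ} {k : ℕ} :
    Fwd a n (fwdList v s k) ↔ ∀ i : ℤ, 0 ≤ i → i < k → a (n + i) = v (s + i) := by
  induction k with
  | zero =>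
    simp only [fwdList, List.range_zero, List.map_nil, Fwd, true_iff]
    intro i h1 h2
    omega
  | succ k ih =>
    have : fwdList v s (k + 1) = fwdList v s k ++ [v (s + k)] := by
      simp [fwdList, List.range_succ]
    rw [this, fwd_append, ih]
    simp only [Fwd, fwdList, List.length_map, List.length_range, and_true]
    refine ⟨fun h i h1 h2 => ?_, fun h =>
      ⟨fun i h1 h2 => h i h1 (by omega), h k (by omega) (by omega)⟩⟩
    rcases (show i ≤ k by omega).lt_or_eq with h3 | rfl
    · exact h.1 i h1 h3
    · exact h.2

lemma bwd_bwdList {a v : ℤ → ℕ} {n s : ℤ} {k : ℕ} :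
    Bwd a n (bwdList v s k) ↔ ∀ i : ℤ, -k ≤ i → i < 0 → a (n + i) = v (s + i) := by
  induction k with
  | zero =>
    simp only [bwdList, List.range_zero, List.map_nil, Bwd, true_iff]
    intro i h1 h2
    omega
  | succ k ih =>
    have : bwdList v s (k + 1) = bwdList v s k ++ [v (s + (-k - 1))] := by
      simp only [bwdList, List.range_succ, List.map_append, List.map_cons, List.map_nil]
      rw [show s - 1 - (k : ℤ) = s + (-k - 1) by ring]
    rw [this, bwd_append, ih]
    simp only [Bwd, bwdList, List.length_map, List.length_range, and_true]
    rw [show n - (k : ℤ) - 1 = n + (-k - 1) by ring]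
    refine ⟨fun h i h1 h2 => ?_, fun h =>
      ⟨fun i h1 h2 => h i (by omega) h2, h _ (by omega) (by omega)⟩⟩
    rcases (show -(k : ℤ) - 1 ≤ i by omega).lt_or_eq with h3 | rfl
    · exact h.1 i (by omega) h2
    · exact h.2

/-- The sequence `a` around `n` agrees with `v` around `0`, from `-L` to `R`. -/
def Window (a v : ℤ → ℕ) (n L R : ℤ) : Prop := ∀ i, -L ≤ i → i ≤ R → a (n + i) = v i

lemma window_iff {a v : ℤ → ℕ} {n : ℤ} {L R : ℕ} :
    Window a v n L R ↔ Bwd a n (bwdList v 0 L) ∧ Fwd a n (fwdList v 0 (R + 1)) := by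
  simp only [fwd_fwdList, bwd_bwdList, zero_add, Window]
  push_cast
  refine ⟨fun h => ⟨fun i h1 h2 => h i h1 (by omega), fun i h1 h2 => h i (by omega) (by omega)⟩,
    fun h i h1 h2 => ?_⟩
  rcases lt_or_ge i 0 with h3 | h3
  · exact h.1 i h1 h3
  · exact h.2 i h3 (by omega)

namespace Tails

variable {F : Filter ℤ} {a : ℤ → ℕ} {α γ : ℤ → ℝ}

lemma lt_of_window (H : Tails F a α γ) {v : ℤ → ℕ}
    (hv : ∀ s < 7, tooSmall loNum (bwdList v (s : ℕ) 16) (fwdList v (s : ℕ) 16) = true) :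
    ∀ᶠ n in F, ∀ s : ℤ, 0 ≤ s → s < 7 → Window a v (n - s) 16 22 →
      α n + 1 / γ n < loNum / 10 ^ 13 := by
  have key : ∀ᶠ n in F, ∀ s ∈ Finset.range 7, Bwd a n (bwdList v (s : ℕ) 16) →
      Fwd a n (fwdList v (s : ℕ) 16) → α n + 1 / γ n < loNum / 10 ^ 13 :=
    (Filter.eventually_all_finset _).mpr fun s hs =>
      H.lt_of_tooSmall (hv s (Finset.mem_range.mp hs))
  filter_upwards [key] with n hn s h1 h2 hw
  lift s to ℕ using h1
  refine hn s (Finset.mem_range.mpr (by omega)) (bwd_bwdList.mpr fun i h3 h4 => ?_)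
    (fwd_fwdList.mpr fun i h3 h4 => ?_)
  all_goals
    push_cast at h3 h4
    rw [← hw (s + i) (by omega) (by omega)]
    congr 1
    ring

end Tails

lemma tooSmall_perWord : ∀ s < 7,
    tooSmall loNum (bwdList perWord (s : ℕ) 16) (fwdList perWord (s : ℕ) 16) = true := by
  decide +kernel

lemma tooSmall_revWord : ∀ s < 7, tooSmall loNum (bwdList revWord (s : ℕ) 16)
    (fwdList revWord (s : ℕ) 16) = true := by
  decide +kernel

/-- There is no continued fraction whose values are eventually below the upper threshold and
frequently above the lower one. -/
theorem Tails.not_frequently {a : ℤ → ℕ} {α γ : ℤ → ℝ} (H : Tails atTop a α γ)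
    (hi : ∀ᶠ n in atTop, α n + 1 / γ n < hiNum / 10 ^ 13) :
    ¬ ∃ᶠ n in atTop, (loNum / 10 ^ 13 : ℝ) < α n + 1 / γ n := by
  intro hlo
  have h1 : ∀ᶠ n in atTop, (loNum / 10 ^ 13 : ℝ) < α n + 1 / γ n →
      Window a perWord n 9 11 ∨ Window a revWord n 11 9 := by
    filter_upwards [H.of_explore hi explore_centre] with n hn h
    obtain ⟨g, hg, h2⟩ := hn trivial trivial fun _ => h
    simp only [List.mem_cons, List.not_mem_nil, or_false] at hg
    rcases hg with rfl | rfl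
    · exact .inl (window_iff (L := 9) (R := 11).mpr h2)
    · exact .inr (window_iff (L := 11) (R := 9).mpr h2)
  have h2 : ∀ᶠ n in atTop, Window a perWord n 9 11 → Window a perWord (n - 7) 9 11 := by
    filter_upwards [H.of_explore hi explore_left] with n hn h
    obtain ⟨h3, h4⟩ := window_iff (L := 9) (R := 11).mp h
    obtain ⟨g, hg, h5, -⟩ := hn h3 h4 (by simp)
    rw [List.mem_singleton.mp hg, bwd_bwdList] at h5
    intro i h6 h7
    rw [show n - 7 + i = n + (i - 7) by ring, ← perWord_sub_seven]
    rcases lt_or_ge (i - 7) 0 with h8 | h8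
    · rw [h5 (i - 7) (by push_cast; omega) h8, zero_add]
    · exact h (i - 7) (by omega) (by omega)
  have h3 : ∀ᶠ n in atTop, Window a revWord n 11 9 →
      Window a revWord (n + 7) 11 9 := by
    filter_upwards [H.of_explore hi explore_right] with n hn h
    obtain ⟨h3, h4⟩ := window_iff (L := 11) (R := 9).mp h
    obtain ⟨g, hg, -, h5⟩ := hn h3 h4 (by simp)
    rw [List.mem_singleton.mp hg, fwd_fwdList] at h5
    intro i h6 h7
    rw [show n + 7 + i = n + (i + 7) by ring, ← revWord_add_seven]
    rcases lt_or_ge (i + 7) 0 with h8 | h8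
    · exact h (i + 7) (by omega) (by omega)
    · rw [h5 (i + 7) h8 (by push_cast; omega), zero_add]
  obtain ⟨N, hN⟩ := eventually_atTop.mp (h1.and (h2.and (h3.and
    ((H.lt_of_window tooSmall_perWord).and (H.lt_of_window tooSmall_revWord)))))
  rw [frequently_atTop] at hlo
  by_cases hw : ∃ n ≥ N, Window a revWord n 11 9
  · obtain ⟨n, hn, hw⟩ := hw
    have hall : ∀ k : ℕ, Window a revWord (n + 7 * k) 11 9 := by
      intro k
      induction k with
      | zero => simpa using hw
      | succ k ih =>
        have := (hN (n + 7 * k) (by omega)).2.2.1 ih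
        rwa [show n + 7 * ((k + 1 : ℕ) : ℤ) = n + 7 * k + 7 by push_cast; ring]
    obtain ⟨m, hm, hlam⟩ := hlo (n + 14)
    refine lt_asymm hlam ((hN m (by omega)).2.2.2.2 ((m - n) % 7) (by omega) (by omega) ?_)
    intro i h4 h5
    have hk : ∀ c : ℤ, -1 ≤ c → -11 ≤ i - 7 * c → i - 7 * c ≤ 9 →
        a (m - (m - n) % 7 + i) = revWord (i - 7 * c) := by
      intro c hc h6 h7
      have := hall ((m - n) / 7 + c).toNat (i - 7 * c) h6 h7
      rw [← this]
      congr 1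
      omega
    rcases (show i ≤ 2 ∨ (2 < i ∧ i ≤ 9) ∨ (9 < i ∧ i ≤ 16) ∨ 16 < i by omega) with h | h | h | h
    · rw [hk (-1) (by omega) (by omega) (by omega), ← revWord_add_seven i]
      congr 1
    · rw [hk 0 (by omega) (by omega) (by omega)]
      congr 1
      ring
    · rw [hk 1 (by omega) (by omega) (by omega), ← revWord_add_seven]
      congr 1
      ring
    · rw [hk 2 (by omega) (by omega) (by omega), ← revWord_add_seven, ← revWord_add_seven]
      congr 1
      ring
  · push Not at hw
    obtain ⟨m₀, hm₀, hlam₀⟩ := hlo (N + 30)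
    obtain ⟨m, hm, hlam⟩ := hlo (m₀ + 30)
    have hwm : Window a perWord m 9 11 :=
      ((hN m (by omega)).1 hlam).resolve_right (hw m (by omega))
    have hall : ∀ k : ℕ, N ≤ m - 7 * k + 7 → Window a perWord (m - 7 * k) 9 11 := by
      intro k
      induction k with
      | zero => simpa using fun _ => hwm
      | succ k ih =>
        intro hk
        push_cast at hk
        have := (hN (m - 7 * k) (by omega)).2.1 (ih (by omega))
        rwa [show m - 7 * ((k + 1 : ℕ) : ℤ) = m - 7 * k - 7 by push_cast; ring]
    refine lt_asymm hlam₀ ((hN m₀ (by omega)).2.2.2.1 ((m₀ - m) % 7) (by omega) (by omega) ?_)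
    intro i h4 h5
    have hk : ∀ c : ℤ, -1 ≤ c → c ≤ 2 → -9 ≤ i - 7 * c → i - 7 * c ≤ 11 →
        a (m₀ - (m₀ - m) % 7 + i) = perWord (i - 7 * c) := by
      intro c hc hc' h6 h7
      have := hall (-((m₀ - m) / 7) - c).toNat (by omega) (i - 7 * c) h6 h7
      rw [← this]
      congr 1
      omega
    rcases (show i ≤ 2 ∨ (2 < i ∧ i ≤ 9) ∨ (9 < i ∧ i ≤ 16) ∨ 16 < i by omega) with h | h | h | h
    · rw [hk (-1) (by omega) (by omega) (by omega) (by omega), ← perWord_add_seven i]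
      congr 1
    · rw [hk 0 (by omega) (by omega) (by omega) (by omega)]
      congr 1
      ring
    · rw [hk 1 (by omega) (by omega) (by omega) (by omega), ← perWord_add_seven]
      congr 1
      ring
    · rw [hk 2 (by omega) (by omega) (by omega) (by omega), ← perWord_add_seven,
        ← perWord_add_seven]
      congr 1
      ring

/-- Every bi-infinite sequence of positive partial quotients at most `3` has a sequence of
complete quotients. -/
lemma exists_fwd (a : ℤ → ℕ) (ha : ∀ n, a n = 1 ∨ a n = 2 ∨ a n = 3) :
    ∃ α : ℤ → ℝ, ∀ n, α n = a n + 1 / α (n + 1) ∧ 5 / 4 ≤ α n ∧ α n ≤ 19 / 5 := by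
  have ha' : ∀ n, (1 : ℝ) ≤ a n ∧ (a n : ℝ) ≤ 3 := by
    intro n
    rcases ha n with h | h | h <;> rw [h] <;> norm_num
  let K : ℕ → Set (ℤ → ℝ) := fun m => Set.pi Set.univ (fun _ => Set.Icc 1 4) ∩
    {α | ∀ n < (m : ℤ), α n * α (n + 1) = a n * α (n + 1) + 1}
  have hcl : ∀ m, IsClosed {α : ℤ → ℝ | ∀ n < (m : ℤ), α n * α (n + 1) = a n * α (n + 1) + 1} := by
    intro m
    simp only [Set.ofPred_forall]
    refine isClosed_iInter fun n => isClosed_iInter fun _ => isClosed_eq ?_ ?_ <;> fun_prop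
  have hco : IsCompact (Set.pi Set.univ (fun _ : ℤ => Set.Icc (1 : ℝ) 4)) :=
    isCompact_univ_pi fun _ => isCompact_Icc
  have hne : ∀ m, (K m).Nonempty := by
    intro m
    let f : ℕ → ℝ := fun k => Nat.rec 1 (fun k x => a (m - k - 1) + 1 / x) k
    have hf : ∀ k, f (k + 1) = a (m - k - 1) + 1 / f k := fun _ => rfl
    have hf1 : ∀ k, 1 ≤ f k ∧ f k ≤ 4 := by
      intro k
      induction k with
      | zero => exact ⟨le_rfl, by norm_num [f]⟩
      | succ k ih =>
        rw [hf]
        have h1 : 1 / f k ≤ 1 := by rw [div_le_one (by linarith)]; exact ih.1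
        have h2 : 0 ≤ 1 / f k := by have := ih.1; positivity
        constructor <;> linarith [ha' (m - k - 1)]
    refine ⟨fun n => f (m - n).toNat, fun n _ => hf1 _, fun n hn => ?_⟩
    have h1 : (m - n).toNat = (m - (n + 1)).toNat + 1 := by omega
    have h2 : (m : ℤ) - ((m - (n + 1)).toNat : ℕ) - 1 = n := by omega
    have h3 := (hf1 (m - (n + 1)).toNat).1
    beta_reduce
    rw [h1, hf, h2]
    field_simp
  obtain ⟨α, hα⟩ := IsCompact.nonempty_iInter_of_sequence_nonempty_isCompact_isClosed K
    (fun m => Set.inter_subset_inter_right _ fun α h n hn => h n (by push_cast; omega)) hne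
    (hco.inter_right (hcl 0)) (fun m => hco.isClosed.inter (hcl m))
  have h1 : ∀ n, 1 ≤ α n ∧ α n ≤ 4 := fun n => (Set.mem_iInter.mp hα 0).1 n trivial
  have h2 : ∀ n, α n = a n + 1 / α (n + 1) := by
    intro n
    have := (Set.mem_iInter.mp hα (n + 1).toNat).2 n (by omega)
    have h3 := (h1 (n + 1)).1
    field_simp
    linarith
  have h3 : ∀ n, 5 / 4 ≤ α n := by
    intro n
    have : 1 / 4 ≤ 1 / α (n + 1) := one_div_le_one_div_of_le (by linarith [h1 (n + 1)]) (h1 _).2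
    linarith [h2 n, ha' n]
  refine ⟨α, fun n => ⟨h2 n, h3 n, ?_⟩⟩
  have : 1 / α (n + 1) ≤ 1 / (5 / 4) := one_div_le_one_div_of_le (by norm_num) (h3 _)
  linarith [h2 n, ha' n]

/-- Every bi-infinite sequence of positive partial quotients at most `3` has complete quotients
in both directions. -/
lemma exists_tails (a : ℤ → ℕ) (ha : ∀ n, a n = 1 ∨ a n = 2 ∨ a n = 3) :
    ∃ α γ, Tails ⊤ a α γ := by
  obtain ⟨α, hα⟩ := exists_fwd a ha
  obtain ⟨γ, hγ⟩ := exists_fwd (fun n => a (-n - 1)) fun n => ha _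
  refine ⟨α, fun n => γ (-n), fun _ => tendsto_top, ?_, ?_, ?_, ?_, ?_⟩ <;>
    simp only [eventually_top]
  · exact ha
  · exact fun n => (hα n).1
  · intro n
    rw [(hγ (-n)).1]
    simp [neg_add_eq_sub]
  · exact fun n => (hα n).2
  · exact fun n => (hγ (-n)).2

/-- Periodic to the left, and eventually alternating between `1` and `2` to the right. -/
def markovWord (i : ℤ) : ℕ := if i ≤ 12 then perWord i else if i % 2 = 1 then 2 else 1

lemma perWord_digit (i : ℤ) : perWord i = 1 ∨ perWord i = 2 ∨ perWord i = 3 := by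
  have h : ∀ j < 7, [3, 2, 2, 2, 1, 2, 3].getD j 0 = 1 ∨ [3, 2, 2, 2, 1, 2, 3].getD j 0 = 2 ∨
    [3, 2, 2, 2, 1, 2, 3].getD j 0 = 3 := by decide
  exact h _ (by omega)

lemma markovWord_digit (i : ℤ) : markovWord i = 1 ∨ markovWord i = 2 ∨ markovWord i = 3 := by
  unfold markovWord
  split_ifs
  · exact perWord_digit i
  · simp
  · simp

lemma bwd_self {v : ℤ → ℕ} (n : ℤ) (k : ℕ) : Bwd v n (bwdList v n k) :=
  bwd_bwdList.mpr fun _ _ _ => rfl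

lemma fwd_self {v : ℤ → ℕ} (n : ℤ) (k : ℕ) : Fwd v n (fwdList v n k) :=
  fwd_fwdList.mpr fun _ _ _ => rfl

lemma perWord_emod (i : ℤ) : perWord (i % 7) = perWord i := by
  rw [perWord, Int.emod_emod, perWord]

lemma tooSmall_markovWord : ∀ k < 20, k ≠ 7 →
    tooSmall loNum (bwdList markovWord ((k : ℕ) - 7) 20) (fwdList markovWord ((k : ℕ) - 7) 20) := by
  decide +kernel

lemma tooBig_markovWord_zero :
    tooBig loNum (bwdList markovWord 0 24) (fwdList markovWord 0 24) := by
  decide +kernel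

lemma tooSmall_markovWord_zero :
    tooSmall hiNum (bwdList markovWord 0 24) (fwdList markovWord 0 24) := by
  decide +kernel

lemma markovWord_zero_mem {α γ : ℤ → ℝ} (H : Tails ⊤ markovWord α γ) :
    loNum / 10 ^ 13 < α 0 + 1 / γ 0 ∧ α 0 + 1 / γ 0 < hiNum / 10 ^ 13 :=
  ⟨eventually_top.mp (H.lt_of_tooBig tooBig_markovWord_zero) 0 (bwd_self 0 24) (fwd_self 0 24),
    eventually_top.mp (H.lt_of_tooSmall tooSmall_markovWord_zero) 0 (bwd_self 0 24) (fwd_self 0 24)⟩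

lemma markovWord_lt {α γ : ℤ → ℝ} (H : Tails ⊤ markovWord α γ) {n : ℤ} (hn : n ≠ 0) :
    α n + 1 / γ n < loNum / 10 ^ 13 := by
  rcases (show 13 ≤ n ∨ (-7 ≤ n ∧ n ≤ 12) ∨ n ≤ -8 by omega) with h | h | h
  · have h1 := eventually_top.mp H.fwd n
    have h2 := (eventually_top.mp H.fwd_mem (n + 1)).1
    have h3 := (eventually_top.mp H.bwd_mem n).1
    have h4 : 1 / α (n + 1) ≤ 1 / (5 / 4) := one_div_le_one_div_of_le (by norm_num) h2
    have h5 : 1 / γ n ≤ 1 / (5 / 4) := one_div_le_one_div_of_le (by norm_num) h3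
    have h6 : (markovWord n : ℝ) ≤ 2 := by
      have : markovWord n ≤ 2 := by
        rw [markovWord, if_neg (by omega)]
        split_ifs <;> norm_num
      exact_mod_cast this
    rw [h1, lt_div_iff₀ (by norm_num)]
    norm_num only [loNum] at h4 h5 ⊢
    linarith
  · have h1 := tooSmall_markovWord (n + 7).toNat (by omega) (by omega)
    rw [show ((n + 7).toNat : ℤ) - 7 = n by omega] at h1
    exact eventually_top.mp (H.lt_of_tooSmall h1) n (bwd_self n 20) (fwd_self n 20)
  · refine eventually_top.mp (H.lt_of_window tooSmall_perWord) n (n % 7) (by omega) (by omega)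
      fun i h1 h2 => ?_
    rw [markovWord, if_pos (by omega), ← perWord_emod, ← perWord_emod i]
    congr 1
    omega

/-- `α n = [a n; a (n + 1), …]` and `β n = [0; a (n - 1), …, a 0 + β 0]` are the two tails of a
one-sided continued fraction all of whose values `α n + β n` are at most `x`. -/
structure BddTails (x : ℝ) (a : ℕ → ℕ) (α β : ℕ → ℝ) : Prop where
  fwd : ∀ n, α n = a n + 1 / α (n + 1)
  bwd : ∀ n, β (n + 1) = 1 / (a n + β n)
  digit : ∀ n, 1 ≤ a n
  fwd_gt : ∀ n, 1 < α n
  bwd_pos : 0 < β 0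
  le : ∀ n, α n + β n ≤ x
  le_init : 1 / α 0 + 1 / β 0 ≤ x

namespace BddTails

variable {x : ℝ} {a : ℕ → ℕ} {α β : ℕ → ℝ}

lemma fwd_succ (H : BddTails x a α β) : α 0 - a 0 = 1 / α 1 := by linarith [H.fwd 0]

lemma bwd_succ (H : BddTails x a α β) : a 0 + β 0 = 1 / β 1 := by rw [H.bwd 0, one_div_one_div]

lemma tail (H : BddTails x a α β) :
    BddTails x (fun n => a (n + 1)) (fun n => α (n + 1)) fun n => β (n + 1) where
  fwd n := H.fwd (n + 1)
  bwd n := H.bwd (n + 1)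
  digit n := H.digit (n + 1)
  fwd_gt n := H.fwd_gt (n + 1)
  bwd_pos := by
    have := H.bwd_pos
    rw [H.bwd]
    positivity
  le n := H.le (n + 1)
  le_init := by
    simp only [zero_add]
    rw [← H.bwd_succ, ← H.fwd_succ]
    linarith [H.le 0]

/-- Lower bound for the values of the quadratic form with roots `α 0` and `-β 0`. -/
theorem le_form (H : BddTails x a α β) (p q : ℕ) (hpq : p ≠ 0 ∨ q ≠ 0) :
    α 0 + β 0 ≤ x * |(p - α 0 * q) * (p + β 0 * q)| := by
  induction hN : p + q using Nat.strong_induction_on generalizing p q a α β with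
  | _ N ih =>
  have hβ := H.bwd_pos
  have hβ1 := H.tail.bwd_pos
  have hα := H.fwd_gt 0
  have hα1 := H.fwd_gt 1
  simp only [zero_add] at hβ1
  have hx : 0 < x := by linarith [H.le 0]
  have hf := H.fwd_succ
  have hb := H.bwd_succ
  rcases Nat.eq_zero_or_pos q with rfl | hq
  · have hp : (1 : ℝ) ≤ p := by
      have : 1 ≤ p := by omega
      exact_mod_cast this
    simp only [Nat.cast_zero, mul_zero, sub_zero, add_zero]
    rw [abs_of_nonneg (by positivity)]
    calc α 0 + β 0 ≤ x * 1 := by linarith [H.le 0]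
      _ ≤ x * (p * p) := by gcongr; nlinarith
  have hq' : (1 : ℝ) ≤ q := by exact_mod_cast hq
  rcases le_or_gt p (a 0 * q) with hp | hp
  · have ha : (1 : ℝ) ≤ a 0 := by exact_mod_cast H.digit 0
    have hp' : (p : ℝ) ≤ a 0 * q := by exact_mod_cast hp
    have hp0 : (0 : ℝ) ≤ p := p.cast_nonneg
    have haα : (a 0 : ℝ) < α 0 := by
      have : 0 < 1 / α 1 := by positivity
      linarith
    have hpα : (p : ℝ) < α 0 * q := by nlinarith
    rw [abs_mul, abs_of_neg (by linarith), abs_of_pos (by positivity : (0 : ℝ) < p + β 0 * q)]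
    have e0 : α 0 + β 0 ≤ x * (α 0 * β 0) := by
      have := H.le_init
      rw [div_add_div _ _ (by linarith) hβ.ne', div_le_iff₀ (by positivity)] at this
      linarith
    have e1 : α 0 + β 0 ≤ x * ((α 0 - a 0) * (a 0 + β 0)) := by
      have h1 := H.le 1
      have h2 : α 0 + β 0 = (α 1 + β 1) * ((α 0 - a 0) * (a 0 + β 0)) := by
        have : α 0 + β 0 = (α 0 - a 0) + (a 0 + β 0) := by ring
        rw [this, hf, hb]
        field_simp
        ring
      rw [h2]
      gcongr
    have hq2 : (1 : ℝ) ≤ q ^ 2 := one_le_pow₀ hq'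
    have e2 : (a 0 * q : ℝ) * (α 0 + β 0) ≤
        (a 0 * q) * (x * (-(p - α 0 * q) * (p + β 0 * q))) := by
      calc (a 0 * q : ℝ) * (α 0 + β 0)
          = (a 0 * q - p) * (α 0 + β 0) * 1 + p * (α 0 + β 0) * 1 := by ring
        _ ≤ (a 0 * q - p) * (x * (α 0 * β 0)) * q ^ 2 +
            p * (x * ((α 0 - a 0) * (a 0 + β 0))) * q ^ 2 := by
          have : (0 : ℝ) ≤ a 0 * q - p := by linarith
          gcongr
        _ ≤ (a 0 * q) * (x * (-(p - α 0 * q) * (p + β 0 * q))) := by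
          have : 0 ≤ (a 0 * q) * x * (p * (a 0 * q - p)) := by
            have : (0 : ℝ) ≤ a 0 * q - p := by linarith
            positivity
          linarith
    exact le_of_mul_le_mul_left e2 (by positivity)
  · have key := ih (q + (p - a 0 * q)) (by have := H.digit 0; nlinarith [Nat.sub_add_cancel hp.le])
      H.tail q (p - a 0 * q) (by omega) rfl
    simp only [zero_add] at key
    rw [Nat.cast_sub hp.le, Nat.cast_mul] at key
    have h1 : (q : ℝ) - α 1 * (p - a 0 * q) = -α 1 * (p - α 0 * q) := by
      have : α 0 = a 0 + 1 / α 1 := H.fwd 0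
      rw [this]
      field_simp
      ring
    have h2 : (q : ℝ) + β 1 * (p - a 0 * q) = β 1 * (p + β 0 * q) := by
      have : β 0 = 1 / β 1 - a 0 := by linarith
      rw [this]
      field_simp
      ring
    have h3 : α 1 + β 1 = α 1 * β 1 * (α 0 + β 0) := by
      have : α 0 + β 0 = (α 0 - a 0) + (a 0 + β 0) := by ring
      rw [this, hf, hb]
      field_simp
      ring
    rw [h1, h2, h3, show -α 1 * (p - α 0 * q) * (β 1 * (p + β 0 * q)) =
      -(α 1 * β 1) * ((p - α 0 * q) * (p + β 0 * q)) by ring, abs_mul, abs_neg,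
      abs_of_pos (by positivity : 0 < α 1 * β 1)] at key
    refine le_of_mul_le_mul_left ?_ (by positivity : 0 < α 1 * β 1)
    linarith

end BddTails

section Markov

variable {a : ℤ → ℕ} {α γ : ℤ → ℝ} {x : ℝ}

lemma bddTails_right (H : Tails ⊤ a α γ) (hx : ∀ n, α n + 1 / γ n ≤ x) :
    BddTails x (fun n => a n) (fun n => α n) fun n => 1 / γ n where
  fwd n := by exact_mod_cast eventually_top.mp H.fwd n
  bwd n := by
    have := eventually_top.mp H.bwd (n + 1)
    rw [add_sub_cancel_right] at this
    push_cast
    rw [this]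
  digit n := by rcases eventually_top.mp H.digit n with h | h | h <;> rw [h] <;> norm_num
  fwd_gt n := by linarith [eventually_top.mp H.fwd_mem n]
  bwd_pos := by
    have := (eventually_top.mp H.bwd_mem 0).1
    simp only [Nat.cast_zero]
    positivity
  le n := hx n
  le_init := by
    have h1 := eventually_top.mp H.fwd (-1)
    have h2 := eventually_top.mp H.bwd 0
    norm_num only [one_div_one_div, Nat.cast_zero] at h1 h2 ⊢
    linarith [hx (-1)]

lemma bddTails_left (H : Tails ⊤ a α γ) (hx : ∀ n, α n + 1 / γ n ≤ x) :
    BddTails x (fun n => a (-n - 1)) (fun n => γ (-n)) fun n => 1 / α (-n) where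
  fwd n := by
    rw [eventually_top.mp H.bwd (-n)]
    push_cast
    rw [neg_add']
  bwd n := by
    have := eventually_top.mp H.fwd (-n - 1)
    rw [sub_add_cancel] at this
    push_cast
    rw [neg_add', this]
  digit n := by rcases eventually_top.mp H.digit (-n - 1) with h | h | h <;> rw [h] <;> norm_num
  fwd_gt n := by linarith [eventually_top.mp H.bwd_mem (-n)]
  bwd_pos := by
    have := (eventually_top.mp H.fwd_mem 0).1
    simp only [Nat.cast_zero, neg_zero]
    positivity
  le n := by
    have h1 := eventually_top.mp H.fwd (-n - 1)
    have h2 := eventually_top.mp H.bwd (-n)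
    rw [sub_add_cancel] at h1
    linarith [hx (-n - 1)]
  le_init := by
    simp only [one_div_one_div, Nat.cast_zero, neg_zero]
    linarith [hx 0]

lemma le_form_int (H : Tails ⊤ a α γ) (hx : ∀ n, α n + 1 / γ n ≤ x) (p q : ℤ)
    (hpq : p ≠ 0 ∨ q ≠ 0) :
    α 0 + 1 / γ 0 ≤ x * |(p - α 0 * q) * (p + 1 / γ 0 * q)| := by
  wlog hp : 0 ≤ p generalizing p q
  · have := this (-p) (-q) (by omega) (by omega)
    push_cast at this
    rwa [show (-p - α 0 * -q : ℝ) * (-p + 1 / γ 0 * -q) = (p - α 0 * q) * (p + 1 / γ 0 * q) by ring]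
      at this
  lift p to ℕ using hp
  obtain ⟨q, rfl | rfl⟩ := q.eq_nat_or_neg
  · simpa using (bddTails_right H hx).le_form p q (by omega)
  · have key := (bddTails_left H hx).le_form q p (by omega)
    have h1 := (eventually_top.mp H.fwd_mem 0).1
    have h2 := (eventually_top.mp H.bwd_mem 0).1
    simp only [Nat.cast_zero, neg_zero] at key
    push_cast
    have hα : 0 < α 0 := by linarith
    have hγ : 0 < γ 0 := by linarith
    rw [show ((p : ℝ) - α 0 * -q) * (p + 1 / γ 0 * -q) =
      -(α 0 / γ 0) * ((q - γ 0 * p) * (q + 1 / α 0 * p)) by field_simp; ring, abs_mul, abs_neg,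
      abs_of_pos (by positivity)]
    calc α 0 + 1 / γ 0 = α 0 / γ 0 * (γ 0 + 1 / α 0) := by field_simp
      _ ≤ α 0 / γ 0 * (x * |(q - γ 0 * p) * (q + 1 / α 0 * p)|) := by gcongr
      _ = _ := by ring

/-- If the values `α n + 1 / γ n` of a bi-infinite sequence are maximal at `0`, then the maximum
belongs to the Markov spectrum. -/
theorem mem_markovSpectrum (H : Tails ⊤ a α γ) (hx : ∀ n, α n + 1 / γ n ≤ α 0 + 1 / γ 0) :
    α 0 + 1 / γ 0 ∈ MarkovSpectrum := by
  have h1 := (eventually_top.mp H.fwd_mem 0).1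
  have h2 := (eventually_top.mp H.bwd_mem 0).1
  have hpos : 0 < α 0 + 1 / γ 0 := by positivity
  have hΔ : (1 / γ 0 - α 0) ^ 2 - 4 * 1 * -(α 0 * (1 / γ 0)) = (α 0 + 1 / γ 0) ^ 2 := by ring
  have hval : markovVal 1 (1 / γ 0 - α 0) (-(α 0 * (1 / γ 0))) =
      ENNReal.ofReal (α 0 + 1 / γ 0) := by
    rw [markovVal, hΔ, Real.sqrt_sq hpos.le]
    refine le_antisymm (iSup₂_le fun pq hpq => ENNReal.div_le_of_le_mul ?_)
      (le_trans ?_ (le_iSup₂ (1, 0) (by simp)))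
    · have := le_form_int H hx pq.1 pq.2 (by
        contrapose! hpq
        exact Prod.ext hpq.1 hpq.2)
      rw [← ENNReal.ofReal_mul hpos.le]
      refine ENNReal.ofReal_le_ofReal (this.trans_eq ?_)
      congr 2
      ring
    · simp
  refine ⟨1, _, _, by rw [hΔ]; positivity, by rw [hval]; exact ENNReal.ofReal_ne_top, ?_⟩
  rw [hval, ENNReal.toReal_ofReal hpos.le]

end Markov

/-- `A n = [a n; a (n + 1), …]` are the complete quotients of `θ`, and
`β n = [0; a (n - 1), …, a 0]`. -/
structure Quotients (θ : ℝ) (a : ℕ → ℕ) (A β : ℕ → ℝ) : Prop where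
  zero : θ = ⌊θ⌋ + 1 / A 0
  fwd : ∀ n, A n = a n + 1 / A (n + 1)
  bwd_zero : β 0 = 0
  bwd : ∀ n, β (n + 1) = 1 / (a n + β n)
  digit : ∀ n, 1 ≤ a n
  fwd_gt : ∀ n, 1 < A n

lemma exists_quotients {θ : ℝ} (hθ : Irrational θ) : ∃ a A β, Quotients θ a A β := by
  have step : ∀ y : ℝ, Irrational y → Irrational (1 / Int.fract y) ∧ 1 < 1 / Int.fract y := by
    intro y hy
    have h1 : Irrational (Int.fract y) := hy.sub_intCast _
    have h2 : 0 < Int.fract y := (Int.fract_nonneg y).lt_of_ne' h1.ne_zero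
    exact ⟨by simpa using h1.inv, (one_lt_div h2).mpr (Int.fract_lt_one y)⟩
  let A : ℕ → ℝ := fun n => Nat.rec (1 / Int.fract θ) (fun _ y => 1 / Int.fract y) n
  have hA : ∀ n, A (n + 1) = 1 / Int.fract (A n) := fun _ => rfl
  have hA1 : ∀ n, Irrational (A n) ∧ 1 < A n := by
    intro n
    induction n with
    | zero => exact step θ hθ
    | succ n ih => exact step _ ih.1
  let β : ℕ → ℝ := fun n => Nat.rec 0 (fun k y => 1 / (⌊A k⌋₊ + y)) n
  refine ⟨fun n => ⌊A n⌋₊, A, β, ?_, fun n => ?_, rfl, fun _ => rfl, fun n => ?_,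
    fun n => (hA1 n).2⟩
  · rw [show A 0 = 1 / Int.fract θ from rfl, one_div_one_div, Int.floor_add_fract]
  · rw [hA, one_div_one_div, natCast_floor_eq_intCast_floor (by linarith [hA1 n]),
      Int.floor_add_fract]
  · exact Nat.le_floor (by simpa using (hA1 n).2.le)

namespace Quotients

variable {θ : ℝ} {a : ℕ → ℕ} {A β : ℕ → ℝ}

lemma bwd_nonneg (H : Quotients θ a A β) (n : ℕ) : 0 ≤ β n := by
  induction n with
  | zero => rw [H.bwd_zero]
  | succ n ih => rw [H.bwd]; positivity

lemma bwd_pos (H : Quotients θ a A β) (n : ℕ) : 0 < β (n + 1) := by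
  have h1 := H.bwd_nonneg n
  have h2 : (1 : ℝ) ≤ a n := by exact_mod_cast H.digit n
  rw [H.bwd]
  positivity

lemma inv_bwd (H : Quotients θ a A β) (n : ℕ) : 1 / β (n + 1) = a n + β n := by
  rw [H.bwd, one_div_one_div]

lemma pos (H : Quotients θ a A β) (n : ℕ) : 0 < A n + β n := by
  linarith [H.bwd_nonneg n, H.fwd_gt n]

lemma root_step (H : Quotients θ a A β) (n : ℕ) (p q : ℝ) :
    q - A (n + 1) * (p - a n * q) = -A (n + 1) * (p - A n * q) := by
  have := H.fwd_gt (n + 1)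
  rw [H.fwd n]
  field_simp
  ring

/-- The normalised quadratic form with roots `A n` and `-β n`. -/
noncomputable def form (A β : ℕ → ℝ) (n : ℕ) (p q : ℝ) : ℝ :=
  |(p - A n * q) * (p + β n * q)| / (A n + β n)

lemma form_step (H : Quotients θ a A β) (n : ℕ) (p q : ℝ) :
    form A β (n + 1) q (p - a n * q) = form A β n p q := by
  have h1 := H.fwd_gt (n + 1)
  have h2 := H.bwd_pos n
  have h3 := H.pos n
  have h4 : q + β (n + 1) * (p - a n * q) = β (n + 1) * (p + β n * q) := by
    have : β n = 1 / β (n + 1) - a n := by linarith [H.inv_bwd n]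
    rw [this]
    field_simp
    ring
  have h5 : A (n + 1) + β (n + 1) = A (n + 1) * β (n + 1) * (A n + β n) := by
    have : β n = 1 / β (n + 1) - a n := by linarith [H.inv_bwd n]
    rw [this, H.fwd n]
    field_simp
    ring
  have h6 : 0 < A (n + 1) * β (n + 1) := by positivity
  rw [form, form, H.root_step, h4, h5,
    show -A (n + 1) * (p - A n * q) * (β (n + 1) * (p + β n * q)) =
    -(A (n + 1) * β (n + 1)) * ((p - A n * q) * (p + β n * q)) by ring, abs_mul, abs_neg,
    abs_of_pos h6, mul_div_mul_left _ _ h6.ne']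

lemma root_zero (H : Quotients θ a A β) (q p : ℝ) :
    q - A 0 * (p - ⌊θ⌋ * q) = A 0 * (q * θ - p) := by
  have := H.fwd_gt 0
  have h : (⌊θ⌋ : ℝ) = θ - 1 / A 0 := by linarith [H.zero]
  rw [h]
  field_simp
  ring

lemma form_zero (H : Quotients θ a A β) (q : ℕ) (p : ℝ) :
    form A β 0 q (p - ⌊θ⌋ * q) = q * |q * θ - p| := by
  have := H.fwd_gt 0
  rw [form, H.root_zero, H.bwd_zero, zero_mul, add_zero, add_zero, abs_mul, abs_mul,
    abs_of_pos (by linarith : 0 < A 0), Nat.abs_cast]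
  field_simp

lemma form_one (n : ℕ) : form A β n 1 0 = 1 / (A n + β n) := by
  simp [form]

lemma exists_convergent (H : Quotients θ a A β) (n P Q : ℕ) (hP : 1 ≤ P) (hQ : Q ≤ P) :
    ∃ P' Q' : ℕ, Q' ≤ P' ∧ n + P + Q ≤ P' + Q' ∧ form A β 0 P' Q' = form A β n P Q := by
  induction n generalizing P Q with
  | zero => exact ⟨P, Q, hQ, by omega, rfl⟩
  | succ n ih =>
    have h1 : P ≤ a n * P := Nat.le_mul_of_pos_left P (H.digit n)
    obtain ⟨P', Q', h2, h3, h4⟩ := ih (a n * P + Q) P (by omega) (by omega)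
    refine ⟨P', Q', h2, by omega, ?_⟩
    rw [h4, ← H.form_step]
    push_cast
    rw [add_sub_cancel_left]

lemma frequently_lagrange (H : Quotients θ a A β) (hθ : Irrational θ) {t : ℝ}
    (ht : ∃ᶠ n in atTop, t ≤ A n + β n) : ENNReal.ofReal t ≤ lagrangeVal θ := by
  refine le_limsup_of_frequently_le ?_
  rw [frequently_atTop] at ht ⊢
  intro M
  obtain ⟨n, hn, hnt⟩ := ht (2 * M)
  obtain ⟨q, Q, h1, h2, h3⟩ := H.exists_convergent n 1 0 le_rfl zero_le_one
  refine ⟨q, by omega, ENNReal.ofReal_le_ofReal ?_⟩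
  have hq : 0 < q := by omega
  have h4 := H.form_zero q (Q + ⌊θ⌋ * q)
  rw [add_sub_cancel_right, h3, Nat.cast_one, Nat.cast_zero, form_one] at h4
  have h5 : distNearestInt (q * θ) ≤ |q * θ - (Q + ⌊θ⌋ * q)| := by
    have := round_le (q * θ : ℝ) (Q + ⌊θ⌋ * q)
    push_cast at this
    exact this
  have h6 : 0 < distNearestInt (q * θ) :=
    abs_pos.mpr ((hθ.natCast_mul hq.ne').sub_intCast _).ne_zero
  have h7 : q * distNearestInt (q * θ) ≤ 1 / (A n + β n) := by
    rw [h4]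
    gcongr
  refine hnt.trans ?_
  rw [le_div_comm₀ (H.pos n) (by positivity)]
  exact h7

lemma eventually_coordinates (H : Quotients θ a A β) (n : ℕ) :
    ∃ C : ℝ, ∀ K : ℝ, ∀ᶠ q : ℕ in atTop, ∃ P Q : ℤ, K ≤ Q ∧ |P - A n * Q| ≤ C ∧
      form A β n P Q = q * distNearestInt (q * θ) := by
  induction n with
  | zero =>
    have hA := H.fwd_gt 0
    refine ⟨A 0, fun K => ?_⟩
    filter_upwards [eventually_ge_atTop ⌈A 0 * (K + 1)⌉₊] with q hq
    have h1 : A 0 * (K + 1) ≤ q := Nat.ceil_le.mp hq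
    have h2 : |(q : ℝ) - A 0 * (round (q * θ) - ⌊θ⌋ * q)| ≤ A 0 := by
      rw [H.root_zero, abs_mul, abs_of_pos (by linarith)]
      have := abs_sub_round (q * θ : ℝ)
      nlinarith
    refine ⟨q, round (q * θ) - ⌊θ⌋ * q, ?_, ?_, ?_⟩
    · push_cast
      have := (abs_le.mp h2).2
      refine le_of_mul_le_mul_left ?_ (by linarith : 0 < A 0)
      linarith
    · exact_mod_cast h2
    · have := H.form_zero q (round (q * θ))
      exact_mod_cast this
  | succ n ih =>
    obtain ⟨C, hC⟩ := ih
    have hA := H.fwd_gt (n + 1)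
    refine ⟨A (n + 1) * C, fun K => ?_⟩
    filter_upwards [hC (A (n + 1) * (K + C))] with q ⟨P, Q, h1, h2, h3⟩
    have h4 : |(Q : ℝ) - A (n + 1) * (P - a n * Q)| ≤ A (n + 1) * C := by
      rw [H.root_step, abs_mul, abs_neg, abs_of_pos (by linarith)]
      gcongr
    refine ⟨Q, P - a n * Q, ?_, ?_, ?_⟩
    · push_cast
      have := (abs_le.mp h4).2
      refine le_of_mul_le_mul_left ?_ (by linarith : 0 < A (n + 1))
      linarith
    · exact_mod_cast h4
    · rw [← h3, ← H.form_step n]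
      push_cast
      rfl

lemma bddTails (H : Quotients θ a A β) {t : ℝ} {N : ℕ} (h : ∀ n ≥ N, A n + β n ≤ t) :
    BddTails t (fun n => a (n + (N + 1))) (fun n => A (n + (N + 1))) fun n => β (n + (N + 1)) where
  fwd n := by rw [H.fwd, add_right_comm]
  bwd n := by rw [add_right_comm, H.bwd]
  digit n := H.digit _
  fwd_gt n := H.fwd_gt _
  bwd_pos := by simpa using H.bwd_pos N
  le n := h _ (by omega)
  le_init := by
    rw [zero_add, H.inv_bwd]
    linarith [h N le_rfl, H.fwd N]

lemma eventually_lagrange (H : Quotients θ a A β) {t : ℝ}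
    (ht : ∀ᶠ n in atTop, A n + β n ≤ t) : lagrangeVal θ ≤ ENNReal.ofReal t := by
  obtain ⟨N, hN⟩ := eventually_atTop.mp ht
  obtain ⟨C, hC⟩ := H.eventually_coordinates (N + 1)
  refine limsup_le_of_le ?_ ?_
  · isBoundedDefault
  filter_upwards [hC (max 1 C)] with q ⟨P, Q, h1, h2, h3⟩
  have hA := H.fwd_gt (N + 1)
  have hQ : (1 : ℝ) ≤ Q := (le_max_left _ _).trans h1
  have hP : (0 : ℝ) ≤ P := by
    have h4 := (abs_le.mp h2).1
    have h5 := (le_max_right _ _).trans h1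
    nlinarith
  lift P to ℕ using by exact_mod_cast hP
  lift Q to ℕ using by exact_mod_cast (zero_le_one.trans hQ)
  have key := (H.bddTails hN).le_form P Q (.inr (by rintro rfl; norm_num at hQ))
  have hpos := H.pos (N + 1)
  simp only [zero_add] at key
  rw [form, div_eq_iff hpos.ne'] at h3
  push_cast at h3
  rw [h3, ← mul_assoc, le_mul_iff_one_le_left hpos] at key
  refine ENNReal.ofReal_le_ofReal ?_
  have h4 : 0 < t := hpos.trans_le (hN _ (by omega))
  have h5 : 0 < q * distNearestInt (q * θ) := by
    by_contra! h
    nlinarith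
  rwa [div_le_iff₀ h5]

end Quotients

namespace Quotients

variable {θ : ℝ} {a : ℕ → ℕ} {A β : ℕ → ℝ}

lemma tails (H : Quotients θ a A β) (h : ∀ᶠ n in atTop, A n + β n < 4) :
    Tails atTop (fun n => a n.toNat) (fun n => A n.toNat) fun n => 1 / β n.toNat := by
  obtain ⟨N, hN⟩ := eventually_atTop.mp h
  have ha1 : ∀ n, (1 : ℝ) ≤ a n := fun n => by exact_mod_cast H.digit n
  have ha3 : ∀ n ≥ N, (a n : ℝ) ≤ 3 := by
    intro n hn
    have h1 : 0 < 1 / A (n + 1) := one_div_pos.mpr (by linarith [H.fwd_gt (n + 1)])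
    have h2 : (a n : ℝ) < 4 := by linarith [hN n hn, H.fwd n, H.bwd_nonneg n]
    have h3 : a n < 4 := by exact_mod_cast h2
    have h4 : a n ≤ 3 := by omega
    exact_mod_cast h4
  have hA : ∀ n ≥ N, 5 / 4 ≤ A n := by
    intro n hn
    have h1 : 1 / 4 ≤ 1 / A (n + 1) := one_div_le_one_div_of_le (by linarith [H.fwd_gt (n + 1)])
      (by linarith [hN (n + 1) (by omega), H.bwd_nonneg (n + 1)])
    linarith [H.fwd n, ha1 n]
  have hA' : ∀ n ≥ N, A n ≤ 19 / 5 := by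
    intro n hn
    have h1 : 1 / A (n + 1) ≤ 1 / (5 / 4) :=
      one_div_le_one_div_of_le (by norm_num) (hA (n + 1) (by omega))
    linarith [H.fwd n, ha3 n hn]
  have hβ1 : ∀ n, β (n + 1) ≤ 1 := by
    intro n
    rw [H.bwd]
    exact div_le_one_of_le₀ (by linarith [ha1 n, H.bwd_nonneg n])
      (by linarith [ha1 n, H.bwd_nonneg n])
  have hβ2 : ∀ n ≥ N, 1 / 4 ≤ β (n + 2) := by
    intro n hn
    rw [H.bwd]
    exact one_div_le_one_div_of_le (by linarith [ha1 (n + 1), H.bwd_nonneg (n + 1)])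
      (by linarith [ha3 (n + 1) (by omega), hβ1 n])
  have hβ3 : ∀ n ≥ N, 5 / 4 ≤ 1 / β (n + 3) := by
    intro n hn
    rw [H.inv_bwd]
    linarith [ha1 (n + 2), hβ2 n hn]
  have hβ4 : ∀ n ≥ N, 1 / β (n + 4) ≤ 19 / 5 := by
    intro n hn
    rw [H.inv_bwd]
    have : β (n + 3) ≤ 4 / 5 := by
      rw [← one_div_one_div (β (n + 3))]
      exact (one_div_le_one_div_of_le (by norm_num) (hβ3 n hn)).trans_eq (by norm_num)
    linarith [ha3 (n + 3) (by omega)]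
  have key : ∀ {P : ℤ → Prop}, (∀ n ≥ N, P ((n + 4 : ℕ) : ℤ)) → ∀ᶠ n in atTop, P n := by
    intro P hP
    filter_upwards [eventually_ge_atTop ((N + 4 : ℕ) : ℤ)] with n hn
    have := hP (n - 4).toNat (by omega)
    rwa [show (((n - 4).toNat + 4 : ℕ) : ℤ) = n by omega] at this
  refine ⟨fun k => tendsto_atTop_add_const_right _ k tendsto_id, key fun n hn => ?_,
    key fun n hn => ?_, key fun n hn => ?_, key fun n hn => ?_, key fun n hn => ?_⟩
  · have h1 := H.digit (n + 4)
    have h2 : a (n + 4) ≤ 3 := by exact_mod_cast ha3 (n + 4) (by omega)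
    rw [Int.toNat_natCast]
    omega
  · exact H.fwd (n + 4)
  · rw [show ((n + 4 : ℕ) : ℤ) - 1 = (n + 3 : ℕ) by push_cast; ring, Int.toNat_natCast,
      Int.toNat_natCast, one_div_one_div, H.inv_bwd]
  · exact ⟨hA _ (by omega), hA' _ (by omega)⟩
  · exact ⟨hβ3 (n + 1) (by omega), hβ4 n hn⟩

end Quotients

/-- The open interval between the two thresholds does not meet the Lagrange spectrum. -/
theorem not_mem_lagrangeSpectrum {x : ℝ} (hlo : loNum / 10 ^ 13 < x) (hhi : x < hiNum / 10 ^ 13) :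
    x ∉ LagrangeSpectrum := by
  rintro ⟨θ, hθ, hfin, hx⟩
  have hval : lagrangeVal θ = ENNReal.ofReal x := by rw [← hx, ENNReal.ofReal_toReal hfin]
  have hx0 : 0 < x := lt_of_le_of_lt (by positivity) hlo
  obtain ⟨a, A, β, H⟩ := exists_quotients hθ
  have h1 : ∀ᶠ n in atTop, A n + β n < hiNum / 10 ^ 13 := by
    by_contra h
    simp only [not_eventually, not_lt] at h
    have := H.frequently_lagrange hθ h
    rw [hval, ENNReal.ofReal_le_ofReal_iff hx0.le] at this
    linarith
  have h2 : ∃ᶠ n in atTop, loNum / 10 ^ 13 < A n + β n := by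
    by_contra h
    simp only [not_frequently, not_lt] at h
    have := H.eventually_lagrange h
    rw [hval, ENNReal.ofReal_le_ofReal_iff (by positivity)] at this
    linarith
  refine (H.tails (h1.mono fun n hn => hn.trans (by norm_num [hiNum]))).not_frequently ?_ ?_
  · obtain ⟨N, hN⟩ := eventually_atTop.mp h1
    filter_upwards [eventually_ge_atTop (N : ℤ)] with n hn
    simpa using hN n.toNat (by omega)
  · rw [frequently_atTop] at h2 ⊢
    intro M
    obtain ⟨n, hn, h3⟩ := h2 M.toNat
    exact ⟨n, by omega, by simpa using h3⟩

end Cusick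

/-- **Negative answer to Cusick's conjecture**: there is `x > √12` with `x ∈ M` and `x ∉ L`. -/
theorem cusick_conjecture_false :
    ∃ x : ℝ, Real.sqrt 12 < x ∧ x ∈ MarkovSpectrum ∧ x ∉ LagrangeSpectrum := by
  obtain ⟨α, γ, H⟩ := Cusick.exists_tails Cusick.markovWord Cusick.markovWord_digit
  obtain ⟨hlo, hhi⟩ := Cusick.markovWord_zero_mem H
  refine ⟨α 0 + 1 / γ 0, ?_, Cusick.mem_markovSpectrum H fun n => ?_,
    Cusick.not_mem_lagrangeSpectrum hlo hhi⟩
  · refine lt_trans ?_ hlo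
    rw [Real.sqrt_lt' (by norm_num [Cusick.loNum])]
    norm_num [Cusick.loNum]
  · rcases eq_or_ne n 0 with rfl | hn
    · rfl
    · exact ((Cusick.markovWord_lt H hn).trans hlo).le
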